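/- arXiv:1702.05814 — 2 statements merged into one kernel-verified Lean document; each statement's English description precedes it below -/
import Mathlib

section
/- Let k ≥ 1 and n : Fin k → ℕ with n i ≥ 1 for all i and with the n i pairwise coprime, and let M be the monoid whose elements are pairs (m, p) with p : Fin k → ℕ and m < n^p, with multiplication (m,p)(m',p') = (m + n^p·m', p + p'). Then any two elements x = (m,p) and y = (m',p') of M that have a common right multiple have a unique right least common multiple w, and the degree of w is the pointwise maximum p ∨ p'. -/
/-- The underlying set of the single-vertex `k`-graph of the standard product of
odometers: pairs `(m, p)` with `p : Fin k → ℕ` and `m < n^p := ∏ i, (n i)^(p i)`. -/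
def Odo (k : ℕ) (n : Fin k → ℕ) : Type :=
  { x : ℕ × (Fin k → ℕ) // x.1 < ∏ i, (n i) ^ (x.2 i) }

/-- Multiplication `(m,p)(m',p') = (m + n^p·m', p + p')` on `Odo k n`. -/
def odoMul {k : ℕ} (n : Fin k → ℕ) (x y : Odo k n) : Odo k n :=
  ⟨(x.val.1 + (∏ i, (n i) ^ (x.val.2 i)) * y.val.1, fun i => x.val.2 i + y.val.2 i), by
    have hx := x.property
    have hy := y.property
    have hsplit : (∏ i, (n i) ^ (x.val.2 i + y.val.2 i)) =
        (∏ i, (n i) ^ (x.val.2 i)) * ∏ i, (n i) ^ (y.val.2 i) := by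
      rw [← Finset.prod_mul_distrib]
      exact Finset.prod_congr rfl fun i _ => pow_add _ _ _
    calc x.val.1 + (∏ i, (n i) ^ (x.val.2 i)) * y.val.1
        < (∏ i, (n i) ^ (x.val.2 i)) + (∏ i, (n i) ^ (x.val.2 i)) * y.val.1 :=
          Nat.add_lt_add_right hx _
      _ = (∏ i, (n i) ^ (x.val.2 i)) * (y.val.1 + 1) := by ring
      _ ≤ (∏ i, (n i) ^ (x.val.2 i)) * ∏ i, (n i) ^ (y.val.2 i) :=
          Nat.mul_le_mul_left _ hy
      _ = ∏ i, (n i) ^ (x.val.2 i + y.val.2 i) := hsplit.symm⟩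

/-- The identity `(0, 0)` of `Odo k n`. -/
def odoOne (k : ℕ) (n : Fin k → ℕ) : Odo k n :=
  ⟨(0, fun _ => 0), by simp⟩

/-- `w` is a right multiple of `x` in `Odo k n`. -/
def OdoRightMultiple {k : ℕ} (n : Fin k → ℕ) (w x : Odo k n) : Prop :=
  ∃ r : Odo k n, w = odoMul n x r

/-- `w` is a right least common multiple of `x` and `y` in `Odo k n`. -/
def OdoIsRightLCM {k : ℕ} (n : Fin k → ℕ) (w x y : Odo k n) : Prop :=
  OdoRightMultiple n w x ∧ OdoRightMultiple n w y ∧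
    ∀ w' : Odo k n, OdoRightMultiple n w' x → OdoRightMultiple n w' y →
      OdoRightMultiple n w' w

/-!
An element `w = (m, q)` is a right multiple of `(a, p)` exactly when `p ≤ q` and `m ≡ a` modulo
`n^p`. Hence the common right multiples of two elements `x`, `y` of degrees `p`, `p'` are cut out by
`p ⊔ p' ≤ q` and two congruences modulo `n^p` and `n^p'`. When the `n i` are pairwise coprime, an
integer is divisible by both moduli iff it is divisible by `n^(p ⊔ p')`, so if one common right
multiple `w₀` exists, then the two congruences amount to the single one `m ≡ m₀` modulo
`n^(p ⊔ p')`: the common right multiples of `x` and `y` are the right multiples of the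
truncation of `w₀` to degree `p ⊔ p'`.
-/

section ProdPow

variable {ι M : Type*} {s : Finset ι}

theorem prod_pow_mul_prod_pow_sub [CommMonoid M] (f : ι → M) {p q : ι → ℕ} (hpq : p ≤ q) :
    (∏ i ∈ s, f i ^ p i) * ∏ i ∈ s, f i ^ (q i - p i) = ∏ i ∈ s, f i ^ q i := by
  rw [← Finset.prod_mul_distrib]
  exact Finset.prod_congr rfl fun i _ => pow_mul_pow_sub (f i) (hpq i)

theorem prod_pow_dvd_prod_pow [CommMonoid M] (f : ι → M) {p q : ι → ℕ} (hpq : p ≤ q) :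
    ∏ i ∈ s, f i ^ p i ∣ ∏ i ∈ s, f i ^ q i :=
  Dvd.intro _ (prod_pow_mul_prod_pow_sub f hpq)

theorem prod_pow_sup_dvd_iff [CommMonoid M] [DecompositionMonoid M] {f : ι → M}
    (hf : (s : Set ι).Pairwise fun i j => IsRelPrime (f i) (f j)) {p q : ι → ℕ} {z : M} :
    ∏ i ∈ s, f i ^ (p ⊔ q) i ∣ z ↔ ∏ i ∈ s, f i ^ p i ∣ z ∧ ∏ i ∈ s, f i ^ q i ∣ z := by
  refine ⟨fun h => ⟨(prod_pow_dvd_prod_pow f le_sup_left).trans h,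
    (prod_pow_dvd_prod_pow f le_sup_right).trans h⟩, fun ⟨hp, hq⟩ => ?_⟩
  refine Finset.prod_dvd_of_isRelPrime (fun i hi j hj hij => (hf hi hj hij).pow) fun i hi => ?_
  rcases max_choice (p i) (q i) with h | h <;> rw [Pi.sup_apply, h]
  · exact (Finset.dvd_prod_of_mem (fun i => f i ^ p i) hi).trans hp
  · exact (Finset.dvd_prod_of_mem (fun i => f i ^ q i) hi).trans hq

theorem modEq_prod_pow_sup_iff {f : ι → ℕ}
    (hf : (s : Set ι).Pairwise fun i j => (f i).Coprime (f j)) {p q : ι → ℕ} {a b : ℕ} :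
    a ≡ b [MOD ∏ i ∈ s, f i ^ (p ⊔ q) i] ↔
      a ≡ b [MOD ∏ i ∈ s, f i ^ p i] ∧ a ≡ b [MOD ∏ i ∈ s, f i ^ q i] := by
  simp only [Nat.modEq_iff_dvd, Int.natCast_dvd]
  exact prod_pow_sup_dvd_iff fun i hi j hj hij => Nat.coprime_iff_isRelPrime.1 (hf hi hj hij)

end ProdPow

section RightMultiple

variable {k : ℕ} {n : Fin k → ℕ} {w w₀ x y : Odo k n}

theorem odoRightMultiple_iff :
    OdoRightMultiple n w x ↔
      x.val.2 ≤ w.val.2 ∧ w.val.1 ≡ x.val.1 [MOD ∏ i, n i ^ x.val.2 i] := by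
  constructor
  · rintro ⟨r, rfl⟩
    exact ⟨fun i => Nat.le_add_right _ _, Nat.add_mul_mod_self_left _ _ _⟩
  · rintro ⟨hdeg, hmod⟩
    have hquot : w.val.1 / ∏ i, n i ^ x.val.2 i < ∏ i, n i ^ (w.val.2 i - x.val.2 i) :=
      Nat.div_lt_of_lt_mul (w.property.trans_eq (prod_pow_mul_prod_pow_sub n hdeg).symm)
    have hrem : w.val.1 % ∏ i, n i ^ x.val.2 i = x.val.1 :=
      Nat.mod_eq_of_modEq hmod x.property
    refine ⟨⟨(w.val.1 / ∏ i, n i ^ x.val.2 i, fun i => w.val.2 i - x.val.2 i), hquot⟩,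
      Subtype.ext (Prod.ext ?_ ?_)⟩
    · calc w.val.1
          = w.val.1 % (∏ i, n i ^ x.val.2 i) +
              (∏ i, n i ^ x.val.2 i) * (w.val.1 / ∏ i, n i ^ x.val.2 i) :=
            (Nat.mod_add_div _ _).symm
        _ = x.val.1 + (∏ i, n i ^ x.val.2 i) * (w.val.1 / ∏ i, n i ^ x.val.2 i) := by
            rw [hrem]
    · exact funext fun i => (Nat.add_sub_cancel' (hdeg i)).symm

namespace OdoRightMultiple

theorem refl (x : Odo k n) : OdoRightMultiple n x x :=
  odoRightMultiple_iff.2 ⟨le_rfl, Nat.ModEq.rfl⟩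

theorem degree_le (h : OdoRightMultiple n w x) : x.val.2 ≤ w.val.2 :=
  (odoRightMultiple_iff.1 h).1

theorem modEq (h : OdoRightMultiple n w x) : w.val.1 ≡ x.val.1 [MOD ∏ i, n i ^ x.val.2 i] :=
  (odoRightMultiple_iff.1 h).2

theorem antisymm (hwx : OdoRightMultiple n w x) (hxw : OdoRightMultiple n x w) : w = x := by
  have hdeg : w.val.2 = x.val.2 := le_antisymm hxw.degree_le hwx.degree_le
  have hlt : w.val.1 < ∏ i, n i ^ x.val.2 i := hdeg ▸ w.property
  exact Subtype.ext (Prod.ext (hwx.modEq.eq_of_lt_of_lt hlt x.property) hdeg)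

theorem iff_modEq (h : OdoRightMultiple n w₀ x) :
    OdoRightMultiple n w x ↔
      x.val.2 ≤ w.val.2 ∧ w.val.1 ≡ w₀.val.1 [MOD ∏ i, n i ^ x.val.2 i] :=
  odoRightMultiple_iff.trans <| and_congr_right fun _ =>
    ⟨fun hw => hw.trans h.modEq.symm, fun hw => hw.trans h.modEq⟩

end OdoRightMultiple

/-- The left divisor of `w` of degree `p`, that is, the initial segment of degree `p` of the path
`w` in the `k`-graph. Its first entry is a genuine remainder, since `n^p` divides the number
`n^(w.val.2)`, which is positive as `w` exists. -/
def Odo.truncate (w : Odo k n) (p : Fin k → ℕ) (hp : p ≤ w.val.2) : Odo k n :=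
  ⟨(w.val.1 % ∏ i, n i ^ p i, p), Nat.mod_lt _ <|
    Nat.pos_of_dvd_of_pos (prod_pow_dvd_prod_pow n hp) (Nat.zero_lt_of_lt w.property)⟩

theorem odoRightMultiple_truncate (w : Odo k n) {p : Fin k → ℕ} (hp : p ≤ w.val.2) :
    OdoRightMultiple n w (w.truncate p hp) :=
  odoRightMultiple_iff.2 ⟨hp, (Nat.mod_modEq _ _).symm⟩

theorem odoRightMultiple_truncate_sup_iff (hn : Pairwise fun i j => (n i).Coprime (n j))
    (hx : OdoRightMultiple n w₀ x) (hy : OdoRightMultiple n w₀ y) :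
    OdoRightMultiple n w
        (w₀.truncate (x.val.2 ⊔ y.val.2) (sup_le hx.degree_le hy.degree_le)) ↔
      OdoRightMultiple n w x ∧ OdoRightMultiple n w y := by
  rw [(odoRightMultiple_truncate w₀ _).iff_modEq, hx.iff_modEq, hy.iff_modEq]
  exact (and_congr sup_le_iff (modEq_prod_pow_sup_iff (hn.set_pairwise _))).trans
    and_and_and_comm

end RightMultiple

namespace OdoIsRightLCM

variable {k : ℕ} {n : Fin k → ℕ} {w w' x y z : Odo k n}

theorem of_forall_iff
    (h : ∀ w, OdoRightMultiple n w z ↔ OdoRightMultiple n w x ∧ OdoRightMultiple n w y) :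
    OdoIsRightLCM n z x y :=
  have ⟨hx, hy⟩ := (h z).1 (.refl z)
  ⟨hx, hy, fun w hwx hwy => (h w).2 ⟨hwx, hwy⟩⟩

theorem unique (hw : OdoIsRightLCM n w x y) (hw' : OdoIsRightLCM n w' x y) : w = w' :=
  (hw'.2.2 w hw.1 hw.2.1).antisymm (hw.2.2 w' hw'.1 hw'.2.1)

end OdoIsRightLCM

/-- If the `n i` are pairwise coprime, any two elements of `Odo k n` having a common
right multiple have a unique right least common multiple, and its degree is the
pointwise maximum of the degrees. -/
theorem odo_unique_rightLCM_of_pairwise_coprime (k : ℕ) (hk : 1 ≤ k)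
    (n : Fin k → ℕ) (hn : ∀ i, 1 ≤ n i)
    (hcop : ∀ i j : Fin k, i ≠ j → Nat.gcd (n i) (n j) = 1) :
    ∀ x y : Odo k n, (∃ w, OdoRightMultiple n w x ∧ OdoRightMultiple n w y) →
      (∃! w, OdoIsRightLCM n w x y) ∧
        ∀ w, OdoIsRightLCM n w x y →
          w.val.2 = fun i => max (x.val.2 i) (y.val.2 i) := by
  rintro x y ⟨w₀, hx, hy⟩
  let z := w₀.truncate (x.val.2 ⊔ y.val.2) (sup_le hx.degree_le hy.degree_le)
  have hz : OdoIsRightLCM n z x y :=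
    .of_forall_iff fun _ => odoRightMultiple_truncate_sup_iff (fun i j => hcop i j) hx hy
  exact ⟨⟨z, hz, fun w hw => hw.unique hz⟩, fun w hw => congrArg (·.val.2) (hw.unique hz)⟩
end

section
/- Let M be a monoid, n ≥ 1 a natural number, f a unit (invertible element) of M, and g : ℕ → M a family of elements such that f·g(s) = g(s+1) whenever s + 1 ≤ n − 1, and f·g(n−1) = g(0)·f. Then: (1) f^s · g(0) = g(s) for all 0 ≤ s ≤ n − 1; (2) for all l ∈ ℕ and all N ∈ ℤ, f^{(n^l)·N} · g(0)^l = g(0)^l · f^N, where integer powers of f are taken in the group of units of M. -/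
/-!
The elements `g 0, …, g (n - 1)` form a partial orbit of left multiplication by `f`, so the
closing relation `f * g (n - 1) = g 0 * f` becomes the Baumslag–Solitar relation
`f ^ n * g 0 = g 0 * f`. Thus `g 0` intertwines `f` with `f ^ n`, and composing `l` such
intertwinings shows that `g 0 ^ l` intertwines `f` with `f ^ (n ^ l)`.
-/

theorem pow_smul_eq_of_forall_smul_eq_succ {M α : Type*} [Monoid M] [MulAction M α]
    {f : M} {x : ℕ → α} {m : ℕ} (hx : ∀ s < m, f • x s = x (s + 1)) {s : ℕ} (hs : s ≤ m) :
    f ^ s • x 0 = x s := by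
  induction s with
  | zero => rw [pow_zero, one_smul]
  | succ s ih => rw [pow_succ', mul_smul, ih (Nat.le_of_succ_le hs), hx s hs]

section Monoid

variable {M : Type*} [Monoid M]

theorem pow_mul_eq_of_forall_mul_eq_succ {f : M} {g : ℕ → M} {m : ℕ}
    (hg : ∀ s < m, f * g s = g (s + 1)) {s : ℕ} (hs : s ≤ m) : f ^ s * g 0 = g s :=
  pow_smul_eq_of_forall_smul_eq_succ (f := f) (x := g) hg hs

theorem semiconjBy_pow_succ_of_forall_mul_eq_succ {f : M} {g : ℕ → M} {m : ℕ}
    (hg : ∀ s < m, f * g s = g (s + 1)) (hclose : f * g m = g 0 * f) :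
    SemiconjBy (g 0) f (f ^ (m + 1)) :=
  calc
    g 0 * f = f * g m := hclose.symm
    _ = f * (f ^ m * g 0) := by rw [pow_mul_eq_of_forall_mul_eq_succ hg le_rfl]
    _ = f ^ (m + 1) * g 0 := by rw [pow_succ', mul_assoc]

theorem semiconjBy_pow_left_of_semiconjBy_zpow {a : M} {u : Mˣ} {k : ℤ}
    (h : SemiconjBy a (u : M) ↑(u ^ k)) (l : ℕ) :
    SemiconjBy (a ^ l) (u : M) ↑(u ^ k ^ l) := by
  induction l with
  | zero => simp
  | succ l ih =>
    have hpow : SemiconjBy a (↑(u ^ k ^ l) : M) ↑(u ^ k ^ (l + 1)) := by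
      rw [pow_succ', zpow_mul]
      exact h.units_zpow_right (k ^ l)
    rw [pow_succ' a]
    exact hpow.mul_left ih

end Monoid

/-- Let `M` be a monoid, `n ≥ 1`, `f` a unit of `M` and `g : ℕ → M` with
`f·g(s) = g(s+1)` for `s + 1 ≤ n − 1` and `f·g(n−1) = g(0)·f`.  Then
`f^s·g(0) = g(s)` for `0 ≤ s ≤ n − 1`, and for all `l ∈ ℕ`, `N ∈ ℤ`,
`f^{(n^l)·N}·g(0)^l = g(0)^l·f^N` (integer powers taken in the group of units). -/
theorem unit_odometer_relations {M : Type*} [Monoid M] (n : ℕ) (hn : 1 ≤ n)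
    (f : Mˣ) (g : ℕ → M)
    (h1 : ∀ s : ℕ, s + 1 ≤ n - 1 → (f : M) * g s = g (s + 1))
    (h2 : (f : M) * g (n - 1) = g 0 * (f : M)) :
    (∀ s : ℕ, s ≤ n - 1 → ((f : M)) ^ s * g 0 = g s) ∧
    (∀ (l : ℕ) (N : ℤ),
      ((f ^ ((n : ℤ) ^ l * N) : Mˣ) : M) * (g 0) ^ l =
        (g 0) ^ l * ((f ^ N : Mˣ) : M)) := by
  refine ⟨fun s hs ↦ pow_mul_eq_of_forall_mul_eq_succ h1 hs, fun l N ↦ ?_⟩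
  have hsemiconj : SemiconjBy (g 0) (f : M) ↑(f ^ (n : ℤ)) := by
    have h := semiconjBy_pow_succ_of_forall_mul_eq_succ h1 h2
    rwa [Nat.sub_add_cancel hn, ← Units.val_pow_eq_pow_val, ← zpow_natCast] at h
  rw [zpow_mul]
  exact ((semiconjBy_pow_left_of_semiconjBy_zpow hsemiconj l).units_zpow_right N).eq.symm
end
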